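/- arXiv:2601.21556 — 2 statements merged into one kernel-verified Lean document; each statement's English description precedes it below -/
import Mathlib

section
/- Let R be a semiprime ring and T a semi-simple left R-module (a direct sum of simple modules). If T is torsionless, then T is J-torsionless. -/
/-- A ring `R` is semiprime if it has no nonzero nilpotent two-sided ideal:
every two-sided ideal `I` with `I^n = 0` for some `n > 0` (i.e. every product of `n`
elements of `I` vanishes) is zero. -/
def IsSemiprimeRing (R : Type*) [Ring R] : Prop :=
  ∀ I : TwoSidedIdeal R,
    (∃ n : ℕ, 0 < n ∧ ∀ f : Fin n → R, (∀ i, f i ∈ I) → (List.ofFn f).prod = 0) → I = ⊥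

/-- A module `M` is torsionless if for every nonzero `m ∈ M` there is a linear map
`f : M → R` with `f m ≠ 0`. -/
def IsTorsionless (R M : Type*) [Ring R] [AddCommGroup M] [Module R M] : Prop :=
  ∀ m : M, m ≠ 0 → ∃ f : M →ₗ[R] R, f m ≠ 0

/-- A module `M` is J-torsionless if for every nonzero `m ∈ M` there is a linear map
`f : M → R` with `f m ∉ J(R)`, where `J(R)` is the Jacobson radical of `R`. -/
def IsJTorsionless (R M : Type*) [Ring R] [AddCommGroup M] [Module R M] : Prop :=
  ∀ m : M, m ≠ 0 → ∃ f : M →ₗ[R] R, f m ∉ Ideal.jacobson (⊥ : Ideal R)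

/-!
Let `f : M → R` be linear and let `f m` annihilate `M`. For every `r`, linearity moves the first two
factors of `f m * r * f m` inside `f`, giving `f (f m • r • m) = 0`; so `f m * R * f m = 0`, and
semiprimeness forces `f m = 0`. Since `J(R)` annihilates every semisimple module, a map that does
not vanish at `m` cannot take a value in `J(R)` there.
-/

theorem mul_eq_zero_of_mem_twoSidedIdeal_span {R : Type*} [Ring R] {s t : Set R}
    (h : ∀ x ∈ s, ∀ r, ∀ y ∈ t, x * r * y = 0) {x y : R}
    (hx : x ∈ TwoSidedIdeal.span s) (hy : y ∈ TwoSidedIdeal.span t) : x * y = 0 := by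
  rw [TwoSidedIdeal.mem_span_iff_mem_addSubgroup_closure] at hx hy
  refine (AddSubgroup.closure_le (AddMonoidHom.mulRight y).ker).mpr ?_ hx
  rintro _ ⟨_, ⟨a, -, x, hxs, rfl⟩, b, -, rfl⟩
  refine (AddSubgroup.closure_le (AddMonoidHom.mulLeft (a * x * b)).ker).mpr ?_ hy
  rintro _ ⟨_, ⟨c, -, y, hyt, rfl⟩, d, -, rfl⟩
  calc a * x * b * (c * y * d) = a * (x * (b * c) * y) * d := by simp only [mul_assoc]
    _ = 0 := by rw [h x hxs _ y hyt, mul_zero, zero_mul]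

namespace IsSemiprimeRing

variable {R : Type*} [Ring R]

theorem eq_bot_of_forall_mul_eq_zero (hR : IsSemiprimeRing R) {I : TwoSidedIdeal R}
    (hI : ∀ x ∈ I, ∀ y ∈ I, x * y = 0) : I = ⊥ :=
  hR I ⟨2, two_pos, fun f hf => by simpa using hI _ (hf 0) _ (hf 1)⟩

theorem eq_zero_of_forall_mul_mul_self_eq_zero (hR : IsSemiprimeRing R) {a : R}
    (ha : ∀ r, a * r * a = 0) : a = 0 := by
  have hspan : TwoSidedIdeal.span {a} = ⊥ :=
    hR.eq_bot_of_forall_mul_eq_zero fun _ hx _ hy =>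
      mul_eq_zero_of_mem_twoSidedIdeal_span (by simpa using ha) hx hy
  rw [← TwoSidedIdeal.mem_bot, ← hspan]
  exact TwoSidedIdeal.subset_span (Set.mem_singleton a)

theorem apply_eq_zero_of_mem_annihilator (hR : IsSemiprimeRing R) {M : Type*} [AddCommGroup M]
    [Module R M] (f : M →ₗ[R] R) {m : M} (hfm : f m ∈ Module.annihilator R M) : f m = 0 :=
  hR.eq_zero_of_forall_mul_mul_self_eq_zero fun r =>
    calc f m * r * f m = f (f m • r • m) := by simp only [map_smul, smul_eq_mul, mul_assoc]
      _ = 0 := by rw [Module.mem_annihilator.mp hfm, map_zero]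

end IsSemiprimeRing

theorem isJTorsionless_of_semisimple_torsionless_general {R M : Type*} [Ring R] [AddCommGroup M]
    [Module R M] (hR : IsSemiprimeRing R) (hM : IsTorsionless R M)
    (hJ : Ring.jacobson R ≤ Module.annihilator R M) : IsJTorsionless R M := by
  intro m hm
  obtain ⟨f, hfm⟩ := hM m hm
  refine ⟨f, fun hfJ => hfm ?_⟩
  rw [Ideal.jacobson_bot] at hfJ
  exact hR.apply_eq_zero_of_mem_annihilator f (hJ hfJ)

/-- A semi-simple torsionless module over a semiprime ring is J-torsionless. -/
theorem isJTorsionless_of_semisimple_torsionless (R T : Type*) [Ring R] [AddCommGroup T]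
    [Module R T] [IsSemisimpleModule R T]
    (hR : IsSemiprimeRing R) (hT : IsTorsionless R T) :
    IsJTorsionless R T :=
  isJTorsionless_of_semisimple_torsionless_general hR hT
    (IsSemisimpleModule.jacobson_le_annihilator R T)
end

section
/- Let R be a semiprime ring. If every simple left R-module is torsionless, then R is a semi-simple ring (i.e., R is semisimple as a left module over itself). -/
universe u

/-!
Over a semiprime ring, a torsionless module `M` has for each `x ≠ 0` a linear map `g : M → R` with
`g x • x ≠ 0`: start from `f` with `f x ≠ 0` and multiply it on the right by some `r` with
`f x * r * f x ≠ 0`. If `M` is moreover simple, then by Schur's lemma the nonzero endomorphism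
`y ↦ g y • x` is invertible, so `M` is a direct summand of `R`, hence projective. Thus every maximal
left ideal has a complement, a minimal left ideal. The socle is therefore contained in no maximal
left ideal, that is, it is all of `R`.
-/

theorem mul_eq_zero_of_mem_twoSidedIdeal_span_singleton {R : Type*} [Ring R] {a x y : R}
    (ha : ∀ r, a * r * a = 0) (hx : x ∈ TwoSidedIdeal.span {a})
    (hy : y ∈ TwoSidedIdeal.span {a}) : x * y = 0 := by
  rw [TwoSidedIdeal.mem_span_iff_mem_addSubgroup_closure] at hx hy
  induction hx, hy using AddSubgroup.closure_induction₂ with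
  | mem _ _ hx hy =>
    obtain ⟨_, ⟨r, -, a, rfl, rfl⟩, s, -, rfl⟩ := hx
    obtain ⟨_, ⟨t, -, a, rfl, rfl⟩, u, -, rfl⟩ := hy
    calc r * a * s * (t * a * u) = r * (a * (s * t) * a) * u := by simp only [mul_assoc]
      _ = 0 := by rw [ha, mul_zero, zero_mul]
  | zero_left => exact zero_mul _
  | zero_right => exact mul_zero _
  | add_left _ _ _ _ _ _ hx hy => rw [add_mul, hx, hy, add_zero]
  | add_right _ _ _ _ _ _ hx hy => rw [mul_add, hx, hy, add_zero]
  | neg_left _ _ _ _ h => rw [neg_mul, h, neg_zero]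
  | neg_right _ _ _ _ h => rw [mul_neg, h, neg_zero]

theorem IsSemiprimeRing.eq_zero_of_forall_mul_mul_eq_zero {R : Type*} [Ring R]
    (hR : IsSemiprimeRing R) {a : R} (ha : ∀ r, a * r * a = 0) : a = 0 := by
  have span_eq_bot : TwoSidedIdeal.span {a} = ⊥ :=
    hR _ ⟨2, two_pos, fun f hf ↦ by
      simpa using mul_eq_zero_of_mem_twoSidedIdeal_span_singleton ha (hf 0) (hf 1)⟩
  rw [← TwoSidedIdeal.mem_bot, ← span_eq_bot]
  exact TwoSidedIdeal.subset_span rfl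

namespace IsTorsionless

variable {R M : Type*} [Ring R] [AddCommGroup M] [Module R M]

theorem exists_apply_smul_ne_zero (hR : IsSemiprimeRing R) (hM : IsTorsionless R M) {x : M}
    (hx : x ≠ 0) : ∃ g : M →ₗ[R] R, g x • x ≠ 0 := by
  obtain ⟨f, hfx⟩ := hM x hx
  obtain ⟨r, hr⟩ : ∃ r, f x * r * f x ≠ 0 := by
    contrapose! hfx
    exact hR.eq_zero_of_forall_mul_mul_eq_zero hfx
  refine ⟨LinearMap.toSpanSingleton R R r ∘ₗ f, fun h ↦ hr ?_⟩
  simpa using congrArg f h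

theorem projective_of_isSimpleModule (hR : IsSemiprimeRing R) [IsSimpleModule R M]
    (hM : IsTorsionless R M) : Module.Projective R M := by
  have := IsSimpleModule.nontrivial R M
  obtain ⟨x, hx⟩ := exists_ne (0 : M)
  obtain ⟨g, hg⟩ := hM.exists_apply_smul_ne_zero hR hx
  let φ : M →ₗ[R] M := LinearMap.toSpanSingleton R M x ∘ₗ g
  have hφ : φ ≠ 0 := fun h ↦ hg (by simpa [φ] using LinearMap.congr_fun h x)
  let e : M ≃ₗ[R] M := .ofBijective φ (LinearMap.bijective_of_ne_zero hφ)
  exact .of_split g (e.symm ∘ₗ LinearMap.toSpanSingleton R M x)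
    (LinearMap.ext e.symm_apply_apply)

end IsTorsionless

theorem isCompl_range_ker_of_comp_eq_id {R M P : Type*} [Ring R] [AddCommGroup M] [Module R M]
    [AddCommGroup P] [Module R P] {f : M →ₗ[R] P} {s : P →ₗ[R] M} (h : f ∘ₗ s = .id) :
    IsCompl (LinearMap.range s) (LinearMap.ker f) := by
  have hfs : Function.LeftInverse f s := LinearMap.congr_fun h
  have hsf : IsIdempotentElem (s ∘ₗ f) := LinearMap.ext fun x ↦ congrArg s (hfs (f x))
  have hrange : LinearMap.range (s ∘ₗ f) = LinearMap.range s :=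
    LinearMap.range_comp_of_range_eq_top s (LinearMap.range_eq_top.2 hfs.surjective)
  have hker : LinearMap.ker (s ∘ₗ f) = LinearMap.ker f :=
    LinearMap.ker_comp_of_ker_eq_bot f (LinearMap.ker_eq_bot.2 hfs.injective)
  exact hrange ▸ hker ▸ LinearMap.IsIdempotentElem.isCompl hsf

theorem isComplemented_of_projective_quotient {R M : Type*} [Ring R] [AddCommGroup M] [Module R M]
    (N : Submodule R M) [Module.Projective R (M ⧸ N)] : IsComplemented N := by
  obtain ⟨s, hs⟩ := N.mkQ.exists_rightInverse_of_surjective N.range_mkQ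
  have hcompl := isCompl_range_ker_of_comp_eq_id hs
  rw [N.ker_mkQ] at hcompl
  exact ⟨_, hcompl.symm⟩

theorem sSup_atoms_eq_top_of_forall_isCoatom_isComplemented {α : Type*} [CompleteLattice α]
    [IsModularLattice α] [IsCoatomic α] (h : ∀ a : α, IsCoatom a → IsComplemented a) :
    sSup {a : α | IsAtom a} = ⊤ := by
  by_contra hne
  obtain ⟨m, hm, hle⟩ := (eq_top_or_exists_le_coatom _).resolve_left hne
  obtain ⟨a, hma⟩ := h m hm
  have ha : IsAtom a := hma.isCoatom_iff_isAtom.1 hm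
  exact ha.1 (hma.disjoint.eq_bot_of_ge (sSup_le_iff.1 hle a ha))

theorem isSemisimpleModule_of_forall_isCoatom_projective_quotient {R M : Type*} [Ring R]
    [AddCommGroup M] [Module R M] [IsCoatomic (Submodule R M)]
    (h : ∀ N : Submodule R M, IsCoatom N → Module.Projective R (M ⧸ N)) :
    IsSemisimpleModule R M where
  __ := complementedLattice_of_sSup_atoms_eq_top <|
    sSup_atoms_eq_top_of_forall_isCoatom_isComplemented fun N hN ↦
      have := h N hN
      isComplemented_of_projective_quotient N

/-- If `R` is a semiprime ring all of whose simple left modules are torsionless, then `R`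
is a semisimple ring. -/
theorem isSemisimpleRing_of_simples_torsionless (R : Type u) [Ring R]
    (hR : IsSemiprimeRing R)
    (hsimple : ∀ (T : Type u) [AddCommGroup T] [Module R T],
      IsSimpleModule R T → IsTorsionless R T) :
    IsSemisimpleRing R := by
  refine isSemisimpleModule_of_forall_isCoatom_projective_quotient fun I hI ↦ ?_
  have : IsSimpleModule R (R ⧸ I) := isSimpleModule_iff_isCoatom.2 hI
  exact (hsimple (R ⧸ I) this).projective_of_isSimpleModule hR
end
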